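/- For every fixed α ∈ (0,1] and budget B > 0, the allocation rule b ↦ Greedy-EOM(α, b) is monotone: for every bid vector b with positive entries, every agent i ∈ Greedy-EOM(α, b), and every 0 < β ≤ b_i, one has i ∈ Greedy-EOM(α, (β, b_{−i})). -/

import Mathlib

open Classical

/-- Marginal value `m_i(S) = v(S ∪ {i}) - v(S)`. -/
noncomputable def marg {ι : Type*} [DecidableEq ι] (v : Finset ι → ℝ) (S : Finset ι) (i : ι) : ℝ :=
  v (insert i S) - v S

/-- The next agent in the greedy order once the set `S` has been selected:
an agent of `Sᶜ` maximizing marginal value over bid, ties broken by the fixed linear order. -/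
noncomputable def pick {ι : Type*} [Fintype ι] [LinearOrder ι] [Nonempty ι]
    (v : Finset ι → ℝ) (b : ι → ℝ) (S : Finset ι) : ι :=
  if h : Sᶜ.Nonempty then
    (Sᶜ.filter fun j => ∀ j' ∈ Sᶜ, marg v S j' / b j' ≤ marg v S j / b j).min'
      (by
        obtain ⟨j, hj, hmax⟩ := Finset.exists_max_image Sᶜ (fun j => marg v S j / b j) h
        exact ⟨j, Finset.mem_filter.mpr ⟨hj, hmax⟩⟩)
  else Classical.arbitrary ι

/-- `greedySet v b t` is the set `S_t` of the first `t` agents in the greedy order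
computed with respect to the bid vector `b`. -/
noncomputable def greedySet {ι : Type*} [Fintype ι] [LinearOrder ι] [Nonempty ι]
    (v : Finset ι → ℝ) (b : ι → ℝ) : ℕ → Finset ι
  | 0 => ∅
  | t + 1 => insert (pick v b (greedySet v b t)) (greedySet v b t)

/-- `agent v b k` is the `k`-th agent `a_k` in the greedy order (1-indexed). -/
noncomputable def agent {ι : Type*} [Fintype ι] [LinearOrder ι] [Nonempty ι]
    (v : Finset ι → ℝ) (b : ι → ℝ) (k : ℕ) : ι :=
  pick v b (greedySet v b (k - 1))

/-- `optVal v b B A'` is the maximum of `v S` over `S ⊆ A'` with `∑_{i ∈ S} b i ≤ B`. -/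
noncomputable def optVal {ι : Type*} (v : Finset ι → ℝ) (b : ι → ℝ) (B : ℝ)
    (A' : Finset ι) : ℝ :=
  sSup (v '' {S : Finset ι | S ⊆ A' ∧ ∑ i ∈ S, b i ≤ B})

/-- The greedy threshold mechanism `Greedy-TM(γ, b)`: it outputs `S_{k-1}` where `k` is the
least index with `b_{a_k} · v(S_k) > γ · B · m_{a_k}(S_{k-1})`, and all of `A` if no such `k`
exists. -/
noncomputable def greedyTM {ι : Type*} [Fintype ι] [LinearOrder ι] [Nonempty ι]
    (v : Finset ι → ℝ) (B γ : ℝ) (b : ι → ℝ) : Finset ι :=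
  if h : ∃ k, (1 ≤ k ∧ k ≤ Fintype.card ι) ∧
      b (agent v b k) * v (greedySet v b k) >
        γ * B * marg v (greedySet v b (k - 1)) (agent v b k)
  then greedySet v b (Nat.find h - 1)
  else Finset.univ

/-- The exponential-time greedy oracle mechanism `Greedy-EOM(α, b)`: it outputs `S_{k-1}` where
`k` is the least index with `v(S_k) > α · opt_b(A, B)`, and all of `A` if no such `k` exists. -/
noncomputable def greedyEOM {ι : Type*} [Fintype ι] [LinearOrder ι] [Nonempty ι]
    (v : Finset ι → ℝ) (B α : ℝ) (b : ι → ℝ) : Finset ι :=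
  if h : ∃ k, (1 ≤ k ∧ k ≤ Fintype.card ι) ∧
      v (greedySet v b k) > α * optVal v b B Finset.univ
  then greedySet v b (Nat.find h - 1)
  else Finset.univ

/-- The greedy oracle mechanism `Greedy-OM(α, b)` with oracle `O`: it outputs
`{ a_t : 1 ≤ t ≤ n, v(S_t) ≤ α · O(b, A \ {a_t}) }`. -/
noncomputable def greedyOM {ι : Type*} [Fintype ι] [LinearOrder ι] [Nonempty ι]
    (v : Finset ι → ℝ) (O : (ι → ℝ) → Finset ι → ℝ) (α : ℝ) (b : ι → ℝ) : Finset ι :=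
  ((Finset.Icc 1 (Fintype.card ι)).filter
      (fun t => v (greedySet v b t) ≤ α * O b (Finset.univ.erase (agent v b t)))).image
    (fun t => agent v b t)

/-- An allocation rule `f`, mapping bid vectors with positive entries to subsets of the agents,
is monotone if a winner remains a winner after lowering his bid. -/
def MonotoneAlloc {ι : Type*} [DecidableEq ι] (f : (ι → ℝ) → Finset ι) : Prop :=
  ∀ b : ι → ℝ, (∀ j, 0 < b j) → ∀ i ∈ f b, ∀ β : ℝ, 0 < β → β ≤ b i →
    i ∈ f (Function.update b i β)

/-!
An agent belongs to the output of Greedy-EOM exactly when it lies in some greedy prefix whose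
value is at most `α · opt`. Suppose agent `i` lies in such a prefix `S_t` and lowers its bid. A
smaller bid only raises the ratio of `i`, so the greedy order is unchanged up to the step at which
`i` is picked, and this step comes no later than before. The first new prefix containing `i` is
therefore `S_r ∪ {i} ⊆ S_t` for some `r ≤ t`. Its value is at most `v(S_t)`, while `opt` can only
have grown.
-/

section OptVal

variable {ι : Type*} {v : Finset ι → ℝ} {B : ℝ} {A : Finset ι}

theorem optVal_antitone (hB : 0 ≤ B) : Antitone fun b => optVal v b B A := by
  intro b' b hle
  have affordable_finite : {S : Finset ι | S ⊆ A ∧ ∑ j ∈ S, b' j ≤ B}.Finite :=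
    A.powerset.finite_toSet.subset fun S hS => Finset.mem_coe.mpr (Finset.mem_powerset.mpr hS.1)
  have empty_affordable : ∅ ∈ {S : Finset ι | S ⊆ A ∧ ∑ j ∈ S, b j ≤ B} :=
    ⟨Finset.empty_subset A, by simpa using hB⟩
  refine csSup_le_csSup (affordable_finite.image v).bddAbove ⟨v ∅, ∅, empty_affordable, rfl⟩ ?_
  exact Set.image_mono fun S hS => ⟨hS.1, (Finset.sum_le_sum fun j _ => hle j).trans hS.2⟩

end OptVal

theorem marg_nonneg {ι : Type*} [DecidableEq ι] {v : Finset ι → ℝ} (hv : Monotone v)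
    (S : Finset ι) (i : ι) : 0 ≤ marg v S i :=
  sub_nonneg.mpr (hv (Finset.subset_insert i S))

section Greedy

variable {ι : Type*} [Fintype ι] [LinearOrder ι] [Nonempty ι]
  {v : Finset ι → ℝ} {b b' : ι → ℝ} {S : Finset ι} {i j : ι} {t : ℕ}

theorem pick_mem_filter (hS : Sᶜ.Nonempty) :
    pick v b S ∈ Sᶜ.filter fun j => ∀ j' ∈ Sᶜ, marg v S j' / b j' ≤ marg v S j / b j := by
  rw [pick, dif_pos hS]
  exact Finset.min'_mem _ _

theorem pick_notMem (hS : Sᶜ.Nonempty) : pick v b S ∉ S :=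
  Finset.mem_compl.mp (Finset.mem_filter.mp (pick_mem_filter hS)).1

theorem marg_div_le_marg_pick_div (hj : j ∈ Sᶜ) :
    marg v S j / b j ≤ marg v S (pick v b S) / b (pick v b S) :=
  (Finset.mem_filter.mp (pick_mem_filter ⟨j, hj⟩)).2 j hj

theorem pick_le_of_forall_marg_div_le (hj : j ∈ Sᶜ)
    (hmax : ∀ j' ∈ Sᶜ, marg v S j' / b j' ≤ marg v S j / b j) : pick v b S ≤ j := by
  rw [pick, dif_pos ⟨j, hj⟩]
  exact Finset.min'_le _ _ (Finset.mem_filter.mpr ⟨hj, hmax⟩)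

theorem pick_eq_pick_of_le (hv : Monotone v) (hb' : ∀ j, 0 < b' j) (hle : b' ≤ b)
    (heq : b' (pick v b' S) = b (pick v b' S)) : pick v b' S = pick v b S := by
  by_cases hS : Sᶜ.Nonempty
  · have ratio_le (j : ι) : marg v S j / b j ≤ marg v S j / b' j :=
      div_le_div_of_nonneg_left (marg_nonneg hv S j) (hb' j) (hle j)
    have mem' : pick v b' S ∈ Sᶜ := Finset.mem_compl.mpr (pick_notMem hS)
    have mem : pick v b S ∈ Sᶜ := Finset.mem_compl.mpr (pick_notMem hS)
    apply le_antisymm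
    · refine pick_le_of_forall_marg_div_le mem fun j hj => ?_
      calc marg v S j / b' j
          ≤ marg v S (pick v b' S) / b' (pick v b' S) := marg_div_le_marg_pick_div hj
        _ = marg v S (pick v b' S) / b (pick v b' S) := by rw [heq]
        _ ≤ marg v S (pick v b S) / b (pick v b S) := marg_div_le_marg_pick_div mem'
        _ ≤ marg v S (pick v b S) / b' (pick v b S) := ratio_le _
    · refine pick_le_of_forall_marg_div_le mem' fun j hj => ?_
      calc marg v S j / b j
          ≤ marg v S j / b' j := ratio_le j
        _ ≤ marg v S (pick v b' S) / b' (pick v b' S) := marg_div_le_marg_pick_div hj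
        _ = marg v S (pick v b' S) / b (pick v b' S) := by rw [heq]
  · rw [pick, pick, dif_neg hS, dif_neg hS]

theorem greedySet_succ (v : Finset ι → ℝ) (b : ι → ℝ) (t : ℕ) :
    greedySet v b (t + 1) = insert (pick v b (greedySet v b t)) (greedySet v b t) :=
  rfl

theorem greedySet_mono (v : Finset ι → ℝ) (b : ι → ℝ) : Monotone (greedySet v b) :=
  monotone_nat_of_le_succ fun _ => Finset.subset_insert _ _

theorem card_greedySet (ht : t ≤ Fintype.card ι) : (greedySet v b t).card = t := by
  induction t with
  | zero => rfl
  | succ t ih =>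
    have card_eq : (greedySet v b t).card = t := ih (Nat.le_of_succ_le ht)
    have compl_nonempty : (greedySet v b t)ᶜ.Nonempty := by
      rw [← Finset.card_pos, Finset.card_compl]
      lia
    rw [greedySet_succ, Finset.card_insert_of_notMem (pick_notMem compl_nonempty), card_eq]

theorem greedySet_card (v : Finset ι → ℝ) (b : ι → ℝ) :
    greedySet v b (Fintype.card ι) = Finset.univ :=
  (Finset.card_eq_iff_eq_univ _).mp (card_greedySet le_rfl)

theorem greedySet_eq_of_eqOn (hv : Monotone v) (hb' : ∀ j, 0 < b' j) (hle : b' ≤ b)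
    (heq : Set.EqOn b' b (greedySet v b' t)) : greedySet v b' t = greedySet v b t := by
  induction t with
  | zero => rfl
  | succ t ih =>
    have greedySet_eq : greedySet v b' t = greedySet v b t :=
      ih (heq.mono (Finset.coe_subset.mpr (greedySet_mono v b' t.le_succ)))
    have pick_eq : pick v b' (greedySet v b' t) = pick v b (greedySet v b' t) :=
      pick_eq_pick_of_le hv hb' hle (heq (Finset.mem_insert_self _ _))
    rw [greedySet_succ, greedySet_succ, pick_eq, greedySet_eq]

theorem exists_mem_greedySet_subset (hv : Monotone v) (hb' : ∀ j, 0 < b' j) (hle : b' ≤ b)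
    (heq : ∀ j ≠ i, b' j = b j) (hi : i ∈ greedySet v b t) :
    ∃ s, i ∈ greedySet v b' s ∧ greedySet v b' s ⊆ greedySet v b t := by
  have greedySet_eq {r : ℕ} (hr : i ∉ greedySet v b' r) : greedySet v b' r = greedySet v b r :=
    greedySet_eq_of_eqOn hv hb' hle fun j hj => heq j (ne_of_mem_of_not_mem hj hr)
  have mem_at_t : i ∈ greedySet v b' t := by
    by_contra hit
    exact hit (greedySet_eq hit ▸ hi)
  have exists_mem : ∃ s, i ∈ greedySet v b' s := ⟨t, mem_at_t⟩
  obtain ⟨r, hr⟩ : ∃ r, Nat.find exists_mem = r + 1 :=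
    Nat.exists_eq_succ_of_ne_zero fun h0 =>
      Finset.notMem_empty i ((Nat.find_eq_zero exists_mem).mp h0)
  have mem_succ : i ∈ greedySet v b' (r + 1) := hr ▸ Nat.find_spec exists_mem
  have notMem : i ∉ greedySet v b' r := Nat.find_min exists_mem (by lia)
  have r_le : r ≤ t := by
    have := Nat.find_min' exists_mem mem_at_t
    lia
  have pick_eq : i = pick v b' (greedySet v b' r) :=
    (Finset.mem_insert.mp mem_succ).resolve_right notMem
  refine ⟨r + 1, mem_succ, ?_⟩
  rw [greedySet_succ, ← pick_eq, greedySet_eq notMem]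
  exact Finset.insert_subset hi (greedySet_mono v b r_le)

variable {B α : ℝ}

theorem exists_greedySet_of_mem_greedyEOM (hi : i ∈ greedyEOM v B α b) :
    ∃ t, i ∈ greedySet v b t ∧ v (greedySet v b t) ≤ α * optVal v b B Finset.univ := by
  unfold greedyEOM at hi
  split_ifs at hi with h
  · have pred_ne_zero : Nat.find h - 1 ≠ 0 := fun h0 => by
      rw [h0] at hi
      exact Finset.notMem_empty i hi
    have le_card : Nat.find h ≤ Fintype.card ι := (Nat.find_spec h).1.2
    exact ⟨Nat.find h - 1, hi, not_lt.mp fun hlt =>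
      Nat.find_min h (by lia) ⟨⟨by lia, by lia⟩, hlt⟩⟩
  · refine ⟨Fintype.card ι, by rw [greedySet_card]; exact Finset.mem_univ i, ?_⟩
    exact not_lt.mp fun hlt => h ⟨Fintype.card ι, ⟨Fintype.card_pos, le_rfl⟩, hlt⟩

theorem greedySet_subset_greedyEOM (hv : Monotone v)
    (hval : v (greedySet v b t) ≤ α * optVal v b B Finset.univ) :
    greedySet v b t ⊆ greedyEOM v B α b := by
  unfold greedyEOM
  split_ifs with h
  · have t_lt : t < Nat.find h := not_le.mp fun hle =>
      ((Nat.find_spec h).2.trans_le (hv (greedySet_mono v b hle))).not_ge hval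
    exact greedySet_mono v b (Nat.le_sub_one_of_lt t_lt)
  · exact Finset.subset_univ _

theorem greedyEOM_monotone_general (hv : Monotone v) (hB : 0 ≤ B) (hα : 0 ≤ α) :
    MonotoneAlloc (fun b => greedyEOM v B α b) := by
  intro b hb i hi β hβ hβi
  have pos : ∀ j, 0 < Function.update b i β j :=
    (Function.forall_update_iff b fun _ x => 0 < x).mpr ⟨hβ, fun j _ => hb j⟩
  have le : Function.update b i β ≤ b := update_le_self_iff.mpr hβi
  obtain ⟨t, hit, hval⟩ := exists_greedySet_of_mem_greedyEOM hi
  obtain ⟨s, his, hst⟩ := exists_mem_greedySet_subset hv pos le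
    (fun j hj => Function.update_of_ne hj β b) hit
  refine greedySet_subset_greedyEOM hv ?_ his
  calc v (greedySet v (Function.update b i β) s)
      ≤ v (greedySet v b t) := hv hst
    _ ≤ α * optVal v b B Finset.univ := hval
    _ ≤ α * optVal v (Function.update b i β) B Finset.univ :=
      mul_le_mul_of_nonneg_left (optVal_antitone hB le) hα

end Greedy

/-- For every fixed `α ∈ (0,1]` and budget `B > 0`, the allocation rule
`b ↦ Greedy-EOM(α, b)` is monotone (part of Lemma 4.1). -/
theorem greedyEOM_monotone {ι : Type*} [Fintype ι] [LinearOrder ι] [Nonempty ι]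
    (v : Finset ι → ℝ) (hv0 : v (∅ : Finset ι) = 0)
    (hvmono : ∀ S T : Finset ι, S ⊆ T → v S ≤ v T)
    (hvsub : ∀ S T : Finset ι, v (S ∪ T) + v (S ∩ T) ≤ v S + v T)
    (B : ℝ) (hB : 0 < B) (α : ℝ) (hα0 : 0 < α) (hα1 : α ≤ 1) :
    MonotoneAlloc (fun b => greedyEOM v B α b) := by
  exact greedyEOM_monotone_general (fun S T hST => hvmono S T hST) hB.le hα0.le
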